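/- Let V₀ and V be ℚ-subspaces of ℚ(ker μ) such that V has the ker μ-stability (and V = 0 if μ = 0), and let 𝔥 := V₀ ⊕ ⊕_{x̄ ∈ (H/ker μ) \ {0̄}} T(x̄)(V) be the corresponding ideal of ℚH. Then 𝔥 is abelian (i.e., [X,Y] = 0 for all X, Y ∈ 𝔥) if and only if V = 0. -/

import Mathlib

/-!
If `V = 0`, then `𝔥 = V₀ ⊆ ℚ(ker μ)`, which is central in `ℚH`.

Conversely, suppose `𝔥` is abelian and `V ≠ 0`; then `ω ≠ 0`, say `ω a b ≠ 0`. For `f ∈ V` the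
elements `T(a) f` and `T(b) f` lie in `𝔥` (for suitable representatives `a`, `b` of their cosets),
and `[T(a) f, T(b) f] = ω a b • T(a + b) (f * f)`, where `*` is the product of the group algebra
`ℚ[H]` (`bracket_transl`). Hence `f * f = 0`. The group algebra of an abelian group over `ℚ` is
reduced, even in the presence of torsion (`groupAlgebra_sq_eq_zero`): for the involution
`f ↦ f*` induced by negation on the group, `f * f* = 0` forces `f = 0`, since the coefficient of
`f * f*` at `0` is the sum of the squares of the coefficients of `f`; and `f * f = 0` implies
`(f * f*) * (f * f*)* = 0`. So `f = 0`.
-/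

open Finsupp

variable {H : Type*} [AddCommGroup H]

/-- The kernel of the `ℤ`-linear map `μ : H → Hom_ℤ(H, ℤ)` induced by the
alternating form `ω`, i.e. `ker μ = {x ∈ H | ∀ y, ⟨x, y⟩ = 0}`. -/
def kerMu (ω : H →ₗ[ℤ] H →ₗ[ℤ] ℤ) : AddSubgroup H where
  carrier := {x | ∀ y, ω x y = 0}
  add_mem' := by
    intro a b ha hb y
    simp [map_add, ha y, hb y]
  zero_mem' := by intro y; simp
  neg_mem' := by
    intro a ha y
    simp [map_neg, ha y]

/-- The translation operator `T(x)` on `ℚH = H →₀ ℚ`, the `ℚ`-linear map with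
`T(x)([y]) = [x + y]`. -/
noncomputable def transl (x : H) : (H →₀ ℚ) →ₗ[ℚ] (H →₀ ℚ) :=
  Finsupp.lmapDomain ℚ ℚ (fun y => x + y)

open Classical in
/-- The family of graded pieces of `V₀ ⊕ ⊕_{x̄ ≠ 0̄} T(x̄)(V)`: the piece of degree
`0̄` is `V₀`, and the piece of degree `x̄ ≠ 0̄` is `T(x̄)(V) := T(x)(V)` for a
representative `x` of the coset `x̄` (well-defined when `V` is `ker μ`-stable). -/
noncomputable def piecesOf (ω : H →ₗ[ℤ] H →ₗ[ℤ] ℤ) (V₀ V : Submodule ℚ (H →₀ ℚ)) :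
    H ⧸ kerMu ω → Submodule ℚ (H →₀ ℚ) :=
  fun c => if c = 0 then V₀ else Submodule.map (transl (Quotient.out c)) V

/-- The involution `[x] ↦ [-x]` of the group algebra `ℚ[H]`. -/
noncomputable def invol : AddMonoidAlgebra ℚ H →+* AddMonoidAlgebra ℚ H :=
  AddMonoidAlgebra.mapDomainRingHom ℚ (negAddMonoidHom : H →+ H)

lemma coeff_invol (f : AddMonoidAlgebra ℚ H) (x : H) : (invol f).coeff x = f.coeff (-x) := by
  have h := Finsupp.mapDomain_apply (f := fun y : H => -y) neg_injective f.coeff (-x)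
  rw [neg_neg] at h
  exact h

lemma invol_invol (f : AddMonoidAlgebra ℚ H) : invol (invol f) = f := by
  ext x
  simp [coeff_invol]

/-- Positivity of the involution: the coefficient of `f * f*` at `0` is `∑ f(x)²`. -/
lemma eq_zero_of_mul_invol (f : AddMonoidAlgebra ℚ H) (h : f * invol f = 0) : f = 0 := by
  classical
  have h0 : (f * invol f).coeff 0 = ∑ x ∈ f.coeff.support, f.coeff x * f.coeff x := by
    rw [AddMonoidAlgebra.coeff_mul, Finsupp.sum]
    refine Finset.sum_congr rfl fun x _ => ?_
    rw [Finsupp.sum, Finset.sum_eq_single (-x)]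
    · simp [coeff_invol]
    · intro y _ hy
      rw [if_neg]
      intro hxy
      exact hy (eq_neg_of_add_eq_zero_right hxy)
    · intro hx
      rw [Finsupp.notMem_support_iff] at hx
      simp [hx]
  rw [h, AddMonoidAlgebra.coeff_zero, Finsupp.zero_apply, eq_comm,
    Finset.sum_eq_zero_iff_of_nonneg fun x _ => mul_self_nonneg _] at h0
  ext x
  by_contra hx
  exact hx (mul_self_eq_zero.mp (h0 x (Finsupp.mem_support_iff.mpr hx)))

/-- The rational group algebra of an abelian group has no nonzero element of square zero. -/
lemma groupAlgebra_sq_eq_zero (f : AddMonoidAlgebra ℚ H) (h : f * f = 0) : f = 0 := by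
  refine eq_zero_of_mul_invol f (eq_zero_of_mul_invol _ ?_)
  rw [map_mul, invol_invol, mul_mul_mul_comm, mul_comm (invol f) f, mul_mul_mul_comm, h, zero_mul]

lemma transl_single (x y : H) (r : ℚ) : transl x (single y r) = single (x + y) r := by
  simp [transl]

/-- Elements of `ker μ` also pair trivially on the right, the form being alternating. -/
lemma apply_kerMu {ω : H →ₗ[ℤ] H →ₗ[ℤ] ℤ} (halt : ∀ x : H, ω x x = 0) {y : H}
    (hy : y ∈ kerMu ω) (x : H) : ω x y = 0 := by
  have h := halt (x + y)
  have hyx : ω y x = 0 := hy x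
  simpa [halt, hyx] using h

/-- On translates of `ℚ(ker μ)` the bracket is the group algebra product, shifted and scaled. -/
lemma bracket_transl (ω : H →ₗ[ℤ] H →ₗ[ℤ] ℤ) (halt : ∀ x : H, ω x x = 0)
    (B : (H →₀ ℚ) →ₗ[ℚ] (H →₀ ℚ) →ₗ[ℚ] (H →₀ ℚ))
    (hB : ∀ x y : H,
      B (single x 1) (single y 1) = (ω x y : ℚ) • single (x + y) (1 : ℚ))
    (a b : H) {f g : H →₀ ℚ} (hf : f ∈ Finsupp.supported ℚ ℚ (kerMu ω : Set H))
    (hg : g ∈ Finsupp.supported ℚ ℚ (kerMu ω : Set H)) :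
    B (transl a f) (transl b g) = (ω a b : ℚ) • transl (a + b)
      (AddMonoidAlgebra.ofCoeff f * AddMonoidAlgebra.ofCoeff g).coeff := by
  rw [Finsupp.supported_eq_span_single] at hf hg
  induction hf using Submodule.span_induction with
  | zero => simp
  | add f₁ f₂ _ _ h₁ h₂ => simp [h₁, h₂, add_mul]
  | smul r f₁ _ h₁ => simp [h₁, smul_comm r]
  | mem f hf =>
    obtain ⟨x, hx, rfl⟩ := hf
    induction hg using Submodule.span_induction with
    | zero => simp
    | add g₁ g₂ _ _ h₁ h₂ => simp [h₁, h₂, mul_add]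
    | smul r g₁ _ h₁ => simp [h₁, smul_comm r]
    | mem g hg =>
      obtain ⟨y, hy, rfl⟩ := hg
      have hxz : ∀ z, ω x z = 0 := hx
      have hω : ω (a + x) (b + y) = ω a b := by
        simp [hxz, apply_kerMu halt hy]
      simp only [transl_single, hB, hω, AddMonoidAlgebra.ofCoeff_single,
        AddMonoidAlgebra.single_mul_single, AddMonoidAlgebra.coeff_single, mul_one,
        add_add_add_comm]

/-- With `V₀, V ⊆ ℚ(ker μ)`, `V` being `ker μ`-stable
(`V = 0` if `μ = 0`), the ideal `𝔥 = V₀ ⊕ ⊕_{x̄ ≠ 0̄} T(x̄)(V)` is abelian if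
and only if `V = 0`. -/
theorem ideal_abelian_iff
    (ω : H →ₗ[ℤ] H →ₗ[ℤ] ℤ) (halt : ∀ x : H, ω x x = 0)
    (B : (H →₀ ℚ) →ₗ[ℚ] (H →₀ ℚ) →ₗ[ℚ] (H →₀ ℚ))
    (hB : ∀ x y : H,
      B (single x 1) (single y 1) = (ω x y : ℚ) • single (x + y) (1 : ℚ))
    (V₀ V : Submodule ℚ (H →₀ ℚ))
    (hV₀ : V₀ ≤ Finsupp.supported ℚ ℚ (kerMu ω : Set H))
    (hV : V ≤ Finsupp.supported ℚ ℚ (kerMu ω : Set H))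
    (hVstab : ∀ v ∈ kerMu ω, Submodule.map (transl v) V ≤ V)
    (hVzero : ω = 0 → V = ⊥) :
    (∀ X ∈ (⨆ c : H ⧸ kerMu ω, piecesOf ω V₀ V c),
     ∀ Y ∈ (⨆ c : H ⧸ kerMu ω, piecesOf ω V₀ V c), B X Y = 0) ↔ V = ⊥ := by
  constructor
  · intro hab
    by_cases hω : ω = 0
    · exact hVzero hω
    obtain ⟨a, b, hne⟩ : ∃ a b, ω a b ≠ 0 := by
      by_contra! h
      exact hω (LinearMap.ext fun a => LinearMap.ext fun b => h a b)
    -- `𝔥` is defined through chosen representatives, so `a` and `b` are replaced by these.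
    have hrep : ∀ x : H, (Quotient.out (x : H ⧸ kerMu ω) : H) - x ∈ kerMu ω := by
      intro x
      have h := (QuotientAddGroup.eq (s := kerMu ω)).mp
        (Quotient.out_eq' (x : H ⧸ kerMu ω)).symm
      rwa [neg_add_eq_sub] at h
    set a' : H := Quotient.out (a : H ⧸ kerMu ω) with ha'
    set b' : H := Quotient.out (b : H ⧸ kerMu ω) with hb'
    have hne' : ω a' b' ≠ 0 := by
      have h₁ : ω (a' - a) b' = 0 := hrep a b'
      have h₂ : ω a (b' - b) = 0 := apply_kerMu halt (hrep b) a
      rw [map_sub, LinearMap.sub_apply, sub_eq_zero] at h₁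
      rw [map_sub, sub_eq_zero] at h₂
      rwa [h₁, h₂]
    have ha0 : (a : H ⧸ kerMu ω) ≠ 0 := fun h =>
      hne ((QuotientAddGroup.eq_zero_iff a).mp h b)
    have hb0 : (b : H ⧸ kerMu ω) ≠ 0 := fun h =>
      hne (apply_kerMu halt ((QuotientAddGroup.eq_zero_iff b).mp h) a)
    rw [Submodule.eq_bot_iff]
    intro f hf
    have hmem : ∀ c : H ⧸ kerMu ω, c ≠ 0 →
        transl (Quotient.out c) f ∈ ⨆ c : H ⧸ kerMu ω, piecesOf ω V₀ V c := by
      intro c hc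
      refine Submodule.mem_iSup_of_mem c ?_
      rw [piecesOf, if_neg hc]
      exact Submodule.mem_map_of_mem hf
    have h := hab _ (hmem _ ha0) _ (hmem _ hb0)
    rw [bracket_transl ω halt B hB _ _ (hV hf) (hV hf)] at h
    have h' := (smul_eq_zero.mp h).resolve_left (by exact_mod_cast hne')
    have hinj : Function.Injective (transl (a' + b')) :=
      Finsupp.mapDomain_injective (add_right_injective (a' + b'))
    have hsq := hinj (h'.trans (map_zero _).symm)
    exact AddMonoidAlgebra.ofCoeff_eq_zero.mp
      (groupAlgebra_sq_eq_zero _ (AddMonoidAlgebra.coeff_injective hsq))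
  · rintro rfl
    have hle : (⨆ c : H ⧸ kerMu ω, piecesOf ω V₀ ⊥ c) ≤
        Finsupp.supported ℚ ℚ (kerMu ω : Set H) := by
      refine iSup_le fun c => ?_
      rw [piecesOf]
      split_ifs
      · exact hV₀
      · simp
    intro X hX Y hY
    have hid : ∀ f : H →₀ ℚ, transl 0 f = f := fun f => by
      simp only [transl, Finsupp.lmapDomain_apply, zero_add]
      exact Finsupp.mapDomain_id
    have h := bracket_transl ω halt B hB 0 0 (hle hX) (hle hY)
    simpa [hid] using h
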